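/- Neither the ℝ³-valued process (X(t), K'(t), D(t) − t)_{t≥0} nor the ℝ³-valued process (B(t), K'(t), D(t) − t)_{t≥0} is Markov, where X = 2K − B. -/

import Mathlib

open MeasureTheory ProbabilityTheory Set Filter Topology
open scoped Classical

noncomputable section

/-- The σ-algebra generated by a process `Y` up to time `t` (over times in `[0, t]`),
i.e. `σ(Y u : 0 ≤ u ≤ t)`. -/
def natSigma {Ω E : Type*} [MeasurableSpace E] (Y : ℝ → Ω → E) (t : ℝ) :
    MeasurableSpace Ω :=
  ⨆ u : Set.Icc (0 : ℝ) t, MeasurableSpace.comap (Y u) inferInstance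

/-- The σ-algebra generated by the whole (nonnegative-time) process `Y`. -/
def procSigma {Ω E : Type*} [MeasurableSpace E] (Y : ℝ → Ω → E) :
    MeasurableSpace Ω :=
  ⨆ u : Set.Ici (0 : ℝ), MeasurableSpace.comap (Y u) inferInstance

/-- `B` is a standard one-dimensional Brownian motion (with `B 0 = 0`) under `P`:
measurable, a.s. starting at `0` and continuous on `[0, ∞)`, with Gaussian increments
`B t - B s ~ N(0, t - s)` that are independent of the past. -/
structure IsBrownianMotion {Ω : Type*} [MeasurableSpace Ω] (P : Measure Ω)
    (B : ℝ → Ω → ℝ) : Prop where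
  measurable : ∀ t : ℝ, Measurable (B t)
  init : ∀ᵐ ω ∂P, B 0 ω = 0
  cont : ∀ᵐ ω ∂P, ContinuousOn (fun t => B t ω) (Set.Ici 0)
  incr_law : ∀ s t : ℝ, 0 ≤ s → s ≤ t →
    P.map (fun ω => B t ω - B s ω) = gaussianReal 0 (Real.toNNReal (t - s))
  incr_indep : ∀ s t : ℝ, 0 ≤ s → s ≤ t →
    Indep (MeasurableSpace.comap (fun ω => B t ω - B s ω) inferInstance)
      (natSigma B s) P

/-- `W` is a standard `n`-dimensional Brownian motion started at the origin:
its coordinate processes are independent standard one-dimensional Brownian motions. -/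
def IsBrownianMotionND {Ω : Type*} [MeasurableSpace Ω] (P : Measure Ω) {n : ℕ}
    (W : ℝ → Ω → EuclideanSpace ℝ (Fin n)) : Prop :=
  (∀ i : Fin n, IsBrownianMotion P (fun t ω => W t ω i)) ∧
  iIndep (fun i : Fin n => procSigma (fun t ω => W t ω i)) P

/-- The least concave majorant on `[0, ∞)` of a function `f : ℝ → ℝ`:
`t ↦ inf { c t | c concave on [0,∞) and c ≥ f on [0,∞) }`. -/
def concaveMajorant (f : ℝ → ℝ) (t : ℝ) : ℝ :=
  sInf {y | ∃ c : ℝ → ℝ, ConcaveOn ℝ (Set.Ici 0) c ∧ (∀ u, 0 ≤ u → f u ≤ c u) ∧ y = c t}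

/-- Right-hand derivative. -/
def rightDeriv (f : ℝ → ℝ) (t : ℝ) : ℝ := derivWithin f (Set.Ioi t) t

/-- `D(t)`: the first vertex (contact point of the concave majorant) at or after time `t`. -/
def firstVertex (f : ℝ → ℝ) (t : ℝ) : ℝ :=
  sInf {u | t ≤ u ∧ concaveMajorant f u = f u}

/-- The concave majorant process `K` of `B`. -/
def Kproc {Ω : Type*} (B : ℝ → Ω → ℝ) (t : ℝ) (ω : Ω) : ℝ :=
  concaveMajorant (fun u => B u ω) t

/-- The process `X = 2K - B`. -/
def Xproc {Ω : Type*} (B : ℝ → Ω → ℝ) (t : ℝ) (ω : Ω) : ℝ :=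
  2 * Kproc B t ω - B t ω

/-- The right-hand slope process `K'` of the concave majorant. -/
def Kslope {Ω : Type*} (B : ℝ → Ω → ℝ) (t : ℝ) (ω : Ω) : ℝ :=
  rightDeriv (fun u => Kproc B u ω) t

/-- The process `D` of first vertices: `D(t) = inf {u ≥ t : K u = B u}`. -/
def Dproc {Ω : Type*} (B : ℝ → Ω → ℝ) (t : ℝ) (ω : Ω) : ℝ :=
  firstVertex (fun u => B u ω) t

/-- A process `Y` is Markov (w.r.t. its natural filtration): for all `0 ≤ s ≤ t`,
`σ(Y t)` is conditionally independent of `σ(Y u : 0 ≤ u ≤ s)` given `σ(Y s)`. -/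
def IsMarkov {Ω E : Type*} [mΩ : MeasurableSpace Ω] [StandardBorelSpace Ω]
    [MeasurableSpace E] (P : Measure Ω) [IsFiniteMeasure P] (Y : ℝ → Ω → E) : Prop :=
  ∀ s t : ℝ, 0 ≤ s → s ≤ t →
    ∃ hs : MeasurableSpace.comap (Y s) inferInstance ≤ mΩ,
      CondIndep (MeasurableSpace.comap (Y s) inferInstance)
        (MeasurableSpace.comap (Y t) inferInstance)
        (natSigma Y s) hs P

/-!
On the face of `K` containing time `1`, of slope `K'(1)`, the past constrains the future. For `B`:
if no vertex lies in `[1, t]`, the ray of slope `K'(1)` from the last contact point `(g, B g)` with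
`g ≤ 1` reaches `K t ≥ B t` at time `t`, so a bound on all past rays of slope `K'(1)` bounds `B t`
from above. For `X`: `X ≥ K`, with equality at `g`, so a lower bound on all past rays issued from
`(r, X r)` bounds `X t` from below.

The present does not carry this information. Adding to `B` a rational polygon can lift the face
without changing its slope or endpoints, and then change `B` inside the face; so two perturbations
of the same path share the present triple at time `1`, one satisfying the constraint coming from
the past and the other violating it in the future. By Cameron–Martin, the law of the perturbed path
is absolutely continuous with respect to that of `B`, and there are only countably many
perturbations, so almost surely they meet no given null set. If the process were Markov, the past
event and the future event that it excludes would be separated, up to a null set, by an event of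
the present: two conditionally independent events that are almost surely disjoint cannot both have
positive conditional probability.
-/

section ConcaveFunctions

variable {c : ℝ → ℝ} {S : Set ℝ}

lemma concaveOn_affine (hS : Convex ℝ S) (m k : ℝ) : ConcaveOn ℝ S fun u => m + k * u :=
  (concaveOn_const m hS).add ((LinearMap.mulLeft ℝ k).concaveOn hS)

lemma convexOn_affine (hS : Convex ℝ S) (m k : ℝ) : ConvexOn ℝ S fun u => m + k * u :=
  (convexOn_const m hS).add ((LinearMap.mulLeft ℝ k).convexOn hS)

lemma concaveOn_le_add_rightDeriv_mul_sub (hc : ConcaveOn ℝ S c) {s u : ℝ}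
    (hs : s ∈ interior S) (hu : u ∈ S) : c u ≤ c s + rightDeriv c s * (u - s) := by
  have hconv : ConvexOn ℝ S (fun v => (0 + rightDeriv c s * v) - c v) :=
    (convexOn_affine hc.1 0 (rightDeriv c s)).sub hc
  have hderiv : HasDerivWithinAt (fun v => (0 + rightDeriv c s * v) - c v) 0 (Ioi s) s := by
    have hline : HasDerivAt (fun v : ℝ => 0 + rightDeriv c s * v) (rightDeriv c s) s := by
      simpa using (hasDerivAt_id s).const_mul (rightDeriv c s)
    have hdiff : DifferentiableWithinAt ℝ c (Ioi s) s := by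
      simpa using (hc.neg.differentiableWithinAt_Ioi_of_mem_interior hs).neg
    simpa [rightDeriv] using hline.hasDerivWithinAt.fun_sub hdiff.hasDerivWithinAt
  have hmin := hconv.isMinOn_of_rightDeriv_eq_zero hs
    (hderiv.derivWithin (uniqueDiffWithinAt_Ioi s)) hu
  simp only [mem_ofPred_eq] at hmin
  linarith

lemma rightDeriv_eq_of_eqOn_affine {m k s t : ℝ} (hst : s < t)
    (h : EqOn c (fun u => m + k * u) (Icc s t)) : rightDeriv c s = k := by
  have hline : HasDerivAt (fun u : ℝ => m + k * u) k s := by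
    simpa using ((hasDerivAt_id s).const_mul k).const_add m
  refine (hline.hasDerivWithinAt.congr_of_eventuallyEq ?_ (h (left_mem_Icc.2 hst.le))).derivWithin
    (uniqueDiffWithinAt_Ioi s)
  filter_upwards [Ioo_mem_nhdsGT hst] with v hv using h (Ioo_subset_Icc_self hv)

lemma affine_le_concaveOn_of_mem_Icc (hc : ConcaveOn ℝ S c) {m k a b u : ℝ} (ha : a ∈ S)
    (hb : b ∈ S) (hma : m + k * a ≤ c a) (hmb : m + k * b ≤ c b) (hu : u ∈ Icc a b) :
    m + k * u ≤ c u := by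
  have hmin := (hc.sub (convexOn_affine hc.1 m k)).min_le_of_mem_Icc ha hb hu
  simp only [Pi.sub_apply, min_le_iff] at hmin
  rcases hmin with h | h <;> linarith

lemma concaveOn_le_affine_of_notMem_Ioo (hc : ConcaveOn ℝ S c) {m k a b u : ℝ} (hab : a < b)
    (ha : a ∈ S) (hb : b ∈ S) (hma : c a = m + k * a) (hmb : c b = m + k * b) (hu : u ∈ S)
    (h : u ∉ Ioo a b) : c u ≤ m + k * u := by
  have hslope : (c b - c a) / (b - a) = k := by
    rw [div_eq_iff (sub_pos.2 hab).ne', hma, hmb]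
    ring
  rcases lt_trichotomy u a with hua | rfl | hau
  · have hanti := hc.slope_anti_adjacent hu hb hua hab
    rw [hslope, le_div_iff₀ (by linarith)] at hanti
    linarith
  · exact hma.le
  · rcases (not_lt.1 fun hub => h ⟨hau, hub⟩).eq_or_lt with rfl | hbu
    · exact hmb.le
    · have hanti := hc.slope_anti_adjacent ha hu hab hbu
      rw [hslope, div_le_iff₀ (by linarith)] at hanti
      linarith

lemma concaveOn_update_zero (hc : ConcaveOn ℝ (Ici 0) c) {y : ℝ} (hy : y ≤ c 0) :
    ConcaveOn ℝ (Ici 0) (Function.update c 0 y) := by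
  have hle : Function.update c 0 y ≤ c := update_le_self_iff.2 hy
  refine concaveOn_iff_forall_pos.2 ⟨hc.1, fun u hu v hv a b ha hb hab => ?_⟩
  rcases eq_or_ne (a • u + b • v) 0 with h | h
  · simp only [smul_eq_mul] at h
    obtain ⟨hau, hbv⟩ := (add_eq_zero_iff_of_nonneg (mul_nonneg ha.le hu) (mul_nonneg hb.le hv)).1 h
    obtain rfl := (mul_eq_zero_iff_left ha.ne').1 hau
    obtain rfl := (mul_eq_zero_iff_left hb.ne').1 hbv
    simp [← add_mul, hab]
  · rw [Function.update_of_ne h]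
    exact (add_le_add (smul_le_smul_of_nonneg_left (hle u) ha.le)
      (smul_le_smul_of_nonneg_left (hle v) hb.le)).trans (hc.2 hu hv ha.le hb.le hab)

end ConcaveFunctions

section ConcaveMajorant

variable {f c : ℝ → ℝ} {s t : ℝ}

/-- `f` lies below some concave function on `[0, ∞)`. Without this, `concaveMajorant f` is an
infimum over the empty set, with the junk value `0`. -/
def HasConcaveMajorant (f : ℝ → ℝ) : Prop :=
  ∃ c : ℝ → ℝ, ConcaveOn ℝ (Ici 0) c ∧ ∀ u, 0 ≤ u → f u ≤ c u

lemma HasConcaveMajorant.of_le_affine {m k : ℝ} (h : ∀ u, 0 ≤ u → f u ≤ m + k * u) :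
    HasConcaveMajorant f :=
  ⟨_, concaveOn_affine (convex_Ici 0) m k, h⟩

lemma concaveMajorant_le (hc : ConcaveOn ℝ (Ici 0) c) (hfc : ∀ u, 0 ≤ u → f u ≤ c u)
    (ht : 0 ≤ t) : concaveMajorant f t ≤ c t := by
  refine csInf_le ⟨f t, ?_⟩ ⟨c, hc, hfc, rfl⟩
  rintro _ ⟨c', -, hfc', rfl⟩
  exact hfc' t ht

lemma concaveMajorant_le_affine {m k : ℝ} (h : ∀ u, 0 ≤ u → f u ≤ m + k * u) (ht : 0 ≤ t) :
    concaveMajorant f t ≤ m + k * t :=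
  concaveMajorant_le (concaveOn_affine (convex_Ici 0) m k) h ht

namespace HasConcaveMajorant

variable (hf : HasConcaveMajorant f)
include hf

lemma le_concaveMajorant (ht : 0 ≤ t) : f t ≤ concaveMajorant f t := by
  obtain ⟨c, hc, hfc⟩ := hf
  refine le_csInf ⟨_, c, hc, hfc, rfl⟩ ?_
  rintro _ ⟨c', -, hfc', rfl⟩
  exact hfc' t ht

lemma concaveOn_concaveMajorant : ConcaveOn ℝ (Ici 0) (concaveMajorant f) := by
  obtain ⟨c₀, hc₀, hfc₀⟩ := hf
  refine ⟨convex_Ici 0, fun u hu v hv a b ha hb hab => le_csInf ⟨_, c₀, hc₀, hfc₀, rfl⟩ ?_⟩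
  rintro _ ⟨c, hc, hfc, rfl⟩
  calc a • concaveMajorant f u + b • concaveMajorant f v
      ≤ a • c u + b • c v := by
        gcongr
        exacts [concaveMajorant_le hc hfc hu, concaveMajorant_le hc hfc hv]
    _ ≤ c (a • u + b • v) := hc.2 hu hv ha hb hab

lemma concaveMajorant_zero : concaveMajorant f 0 = f 0 := by
  refine (hf.le_concaveMajorant le_rfl).antisymm' ?_
  obtain ⟨c, hc, hfc⟩ := hf
  have hmaj : ∀ u, 0 ≤ u → f u ≤ Function.update c 0 (f 0) u := fun u hu => by
    rcases eq_or_ne u 0 with rfl | h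
    · simp
    · simpa [h] using hfc u hu
  simpa using concaveMajorant_le (concaveOn_update_zero hc (hfc 0 le_rfl)) hmaj le_rfl

lemma continuousOn_concaveMajorant : ContinuousOn (concaveMajorant f) (Ioi 0) :=
  interior_Ici (a := (0 : ℝ)) ▸ hf.concaveOn_concaveMajorant.continuousOn_interior

lemma concaveMajorant_le_tangent (hs : 0 < s) (ht : 0 ≤ t) :
    concaveMajorant f t ≤ concaveMajorant f s + rightDeriv (concaveMajorant f) s * (t - s) :=
  concaveOn_le_add_rightDeriv_mul_sub hf.concaveOn_concaveMajorant (by simpa using hs) ht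

variable (hcont : ContinuousOn f (Ici 0))
include hcont

/-- If `f` exceeded the chord, the maximum `M` of the excess would be attained at some `x₀`; as
`concaveMajorant f` is also dominated by the chord shifted by `M`, it would touch `f` at `x₀`. -/
lemma concaveMajorant_eqOn_chord {m k a b : ℝ} (ha : 0 ≤ a) (hab : a < b)
    (hgap : ∀ u ∈ Ioo a b, f u < concaveMajorant f u) (hma : concaveMajorant f a = m + k * a)
    (hmb : concaveMajorant f b = m + k * b) :
    EqOn (concaveMajorant f) (fun u => m + k * u) (Icc a b) := by
  have hconc := hf.concaveOn_concaveMajorant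
  have hb : 0 ≤ b := ha.trans hab.le
  have hout : ∀ u, 0 ≤ u → u ∉ Ioo a b → f u ≤ m + k * u := fun u hu h =>
    (hf.le_concaveMajorant hu).trans
      (concaveOn_le_affine_of_notMem_Ioo hconc hab ha hb hma hmb hu h)
  obtain ⟨x₀, hx₀, hmax⟩ : ∃ x₀ ∈ Icc a b, ∀ u ∈ Icc a b,
      f u - (m + k * u) ≤ f x₀ - (m + k * x₀) :=
    isCompact_Icc.exists_isMaxOn (nonempty_Icc.2 hab.le)
      ((hcont.mono fun u hu => ha.trans hu.1).fun_sub (by fun_prop))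
  have hexcess : f x₀ - (m + k * x₀) ≤ 0 := by
    by_contra! hpos
    have hx₀' : x₀ ∈ Ioo a b := by
      by_contra h
      linarith [hout x₀ (ha.trans hx₀.1) h]
    have hmaj : ∀ u, 0 ≤ u → f u ≤ (m + (f x₀ - (m + k * x₀))) + k * u := fun u hu => by
      by_cases h : u ∈ Icc a b
      · linarith [hmax u h]
      · linarith [hout u hu fun h' => h (Ioo_subset_Icc_self h')]
    linarith [hgap x₀ hx₀', concaveMajorant_le_affine hmaj (ha.trans hx₀.1)]
  have hle : ∀ u, 0 ≤ u → f u ≤ m + k * u := fun u hu => by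
    by_cases h : u ∈ Ioo a b
    · linarith [hmax u (Ioo_subset_Icc_self h)]
    · exact hout u hu h
  exact fun u hu => (concaveMajorant_le_affine hle (ha.trans hu.1)).antisymm
    (affine_le_concaveOn_of_mem_Icc hconc ha hb hma.ge hmb.ge hu)

lemma isClosed_contact {a : ℝ} (ha : 0 < a) :
    IsClosed {u | a ≤ u ∧ concaveMajorant f u = f u} := by
  have hset : {u | a ≤ u ∧ concaveMajorant f u = f u} =
      {u ∈ Ici a | concaveMajorant f u ≤ f u} := by
    ext u
    exact and_congr_right fun hu =>
      ⟨le_of_eq, fun h => h.antisymm (hf.le_concaveMajorant (ha.le.trans hu))⟩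
  rw [hset]
  exact isClosed_Ici.isClosed_le
    (hf.continuousOn_concaveMajorant.mono fun u hu => ha.trans_le hu)
    (hcont.mono fun u hu => ha.le.trans hu)

lemma exists_last_contact (hs : 0 ≤ s) :
    ∃ g ∈ Icc 0 s, concaveMajorant f g = f g ∧ ∀ u ∈ Ioc g s, f u < concaveMajorant f u := by
  have hlt : ∀ {u}, 0 ≤ u → concaveMajorant f u ≠ f u → f u < concaveMajorant f u := fun hu h =>
    (hf.le_concaveMajorant hu).lt_of_ne' h
  by_cases h : ∃ a ∈ Ioc 0 s, concaveMajorant f a = f a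
  · obtain ⟨a, ha, hcontact⟩ := h
    have hcompact : IsCompact ({u | a ≤ u ∧ concaveMajorant f u = f u} ∩ Iic s) :=
      isCompact_Icc.of_isClosed_subset ((hf.isClosed_contact hcont ha.1).inter isClosed_Iic)
        fun u hu => ⟨hu.1.1, hu.2⟩
    obtain ⟨⟨hag, hg⟩, hgs⟩ := hcompact.sSup_mem ⟨a, ⟨le_rfl, hcontact⟩, ha.2⟩
    refine ⟨_, ⟨ha.1.le.trans hag, hgs⟩, hg, fun u hu => hlt ?_ fun hu' => hu.1.not_ge ?_⟩
    · exact ha.1.le.trans (hag.trans hu.1.le)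
    · exact le_csSup hcompact.bddAbove ⟨⟨hag.trans hu.1.le, hu'⟩, hu.2⟩
  · exact ⟨0, ⟨le_rfl, hs⟩, hf.concaveMajorant_zero,
      fun u hu => hlt hu.1.le fun hu' => h ⟨u, hu, hu'⟩⟩

lemma exists_eqOn_affine_of_no_contact (hs : 0 < s) (hst : s < t)
    (hgap : ∀ u ∈ Ico s t, f u < concaveMajorant f u) :
    ∃ g ∈ Ico 0 s, (∀ u ∈ Ioo g t, f u < concaveMajorant f u) ∧
      EqOn (concaveMajorant f) (fun u => (f g - rightDeriv (concaveMajorant f) s * g) +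
        rightDeriv (concaveMajorant f) s * u) (Icc g t) := by
  obtain ⟨g, hg, hcontact, hlast⟩ := hf.exists_last_contact hcont hs.le
  have hgs : g < s := hg.2.lt_of_ne fun h => (hgap s ⟨le_rfl, hst⟩).ne' (h ▸ hcontact)
  have hgap' : ∀ u ∈ Ioo g t, f u < concaveMajorant f u := fun u hu =>
    (le_or_gt u s).elim (fun h => hlast u ⟨hu.1, h⟩) fun h => hgap u ⟨h.le, hu.2⟩
  have hgt : t - g ≠ 0 := (sub_pos.2 (hgs.trans hst)).ne'
  set k := (concaveMajorant f t - f g) / (t - g) with hk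
  have hline : EqOn (concaveMajorant f) (fun u => (f g - k * g) + k * u) (Icc g t) := by
    refine hf.concaveMajorant_eqOn_chord hcont hg.1 (hgs.trans hst) hgap' (by linarith) ?_
    rw [hk]
    field_simp
    ring
  have hslope : rightDeriv (concaveMajorant f) s = k :=
    rightDeriv_eq_of_eqOn_affine hst fun u hu => hline ⟨hgs.le.trans hu.1, hu.2⟩
  exact ⟨g, ⟨hg.1, hgs⟩, hgap', hslope ▸ hline⟩

end HasConcaveMajorant
end ConcaveMajorant

section PastConstraints

lemma le_of_forall_rat_mem_Ioo_le {F : ℝ → ℝ} {a b q : ℝ} (hab : a < b)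
    (hF : ContinuousWithinAt F (Ioo a b) a) (h : ∀ r : ℚ, (r : ℝ) ∈ Ioo a b → F r ≤ q) :
    F a ≤ q := by
  have hclosure : a ∈ closure (Ioo a b ∩ range ((↑) : ℚ → ℝ)) := by
    have hdense : Ioo a b ⊆ closure (Ioo a b ∩ range ((↑) : ℚ → ℝ)) :=
      Rat.denseRange_cast.open_subset_closure_inter isOpen_Ioo
    exact closure_minimal hdense isClosed_closure (by simp [closure_Ioo hab.ne, hab.le])
  have hmaps : MapsTo F (Ioo a b ∩ range ((↑) : ℚ → ℝ)) (Iic q) := by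
    rintro _ ⟨hr, r, rfl⟩
    exact h r hr
  simpa using (hF.mono inter_subset_left).mem_closure hclosure hmaps

variable {f : ℝ → ℝ} {s t q : ℝ}

lemma ne_of_lt_firstVertex {u : ℝ} (h : t < firstVertex f s) (hsu : s ≤ u) (hut : u ≤ t) :
    concaveMajorant f u ≠ f u := fun hu =>
  (h.trans_le (csInf_le ⟨s, fun _ hv => hv.1⟩ ⟨hsu, hu⟩)).not_ge hut

variable (hf : HasConcaveMajorant f) (hcont : ContinuousOn f (Ici 0)) (hs : 0 < s) (hst : s < t)
  (hvertex : t < firstVertex f s)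
include hf hcont hs hst hvertex

lemma exists_eqOn_affine_of_lt_firstVertex :
    ∃ g ∈ Ico 0 s, ∃ k,
      EqOn (concaveMajorant f) (fun u => (f g - k * g) + k * u) (Icc g t) ∧
      ∀ u ∈ Ico g t, rightDeriv (concaveMajorant f) u = k := by
  obtain ⟨g, hg, -, hline⟩ := hf.exists_eqOn_affine_of_no_contact hcont hs hst
    fun u hu => (hf.le_concaveMajorant (hs.le.trans hu.1)).lt_of_ne'
      (ne_of_lt_firstVertex hvertex hu.1 hu.2.le)
  exact ⟨g, hg, _, hline, fun u hu =>
    rightDeriv_eq_of_eqOn_affine hu.2 fun v hv => hline ⟨hu.1.trans hv.1, hv.2⟩⟩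

lemma le_of_forall_rat_extrapolation_le
    (h : ∀ r : ℚ, (r : ℝ) ∈ Icc 0 s → f r + rightDeriv (concaveMajorant f) s * (t - r) ≤ q) :
    f t ≤ q := by
  obtain ⟨g, hg, k, hline, hslope⟩ :=
    exists_eqOn_affine_of_lt_firstVertex hf hcont hs hst hvertex
  have hfg : ContinuousWithinAt f (Ioo g s) g :=
    (hcont g hg.1).mono fun u hu => hg.1.trans hu.1.le
  have hlimit : f g + k * (t - g) ≤ q :=
    le_of_forall_rat_mem_Ioo_le (F := fun u => f u + k * (t - u)) hg.2
      (hfg.add (by fun_prop)) fun r hr => by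
        simpa [hslope s ⟨hg.2.le, hst⟩] using h r ⟨hg.1.trans hr.1.le, hr.2.le⟩
  have hKt := hline ⟨hg.2.le.trans hst.le, le_rfl⟩
  have hft := hf.le_concaveMajorant (hs.le.trans hst.le)
  linarith

lemma le_of_forall_rat_le_extrapolation
    (h : ∀ r : ℚ, (r : ℝ) ∈ Ioc 0 s → q ≤ (2 * concaveMajorant f r - f r) +
      rightDeriv (concaveMajorant f) r * (t - r)) :
    q ≤ 2 * concaveMajorant f t - f t := by
  obtain ⟨g, hg, k, hline, hslope⟩ :=
    exists_eqOn_affine_of_lt_firstVertex hf hcont hs hst hvertex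
  have hfg : ContinuousWithinAt f (Ioo g s) g :=
    (hcont g hg.1).mono fun u hu => hg.1.trans hu.1.le
  have hlimit : f g - 2 * (f g + k * (g - g)) - k * (t - g) ≤ -q :=
    le_of_forall_rat_mem_Ioo_le (F := fun u => f u - 2 * (f g + k * (u - g)) - k * (t - u)) hg.2
      ((hfg.sub (by fun_prop)).sub (by fun_prop)) fun r hr => by
        have hK := hline ⟨hr.1.le, hr.2.le.trans hst.le⟩
        have hr' := h r ⟨hg.1.trans_lt hr.1, hr.2.le⟩
        rw [hslope r ⟨hr.1.le, hr.2.trans hst⟩] at hr'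
        linarith
  have hKt := hline ⟨hg.2.le.trans hst.le, le_rfl⟩
  have hft := hf.le_concaveMajorant (hs.le.trans hst.le)
  linarith

end PastConstraints

section Faces

/-- The chord `u ↦ m + k * u` over `[g, d]` is a face of the least concave majorant of `f`, that
is, a maximal segment of its graph, and `f` touches it at the endpoints only. -/
structure IsFace (f : ℝ → ℝ) (m k g d : ℝ) : Prop where
  pos : 0 < g
  lt : g < d
  le : ∀ u, 0 ≤ u → f u ≤ m + k * u
  eq_left : f g = m + k * g
  eq_right : f d = m + k * d
  lt_of_mem_Ioo : ∀ u ∈ Ioo g d, f u < m + k * u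

namespace IsFace

variable {f : ℝ → ℝ} {m k g d u : ℝ} (h : IsFace f m k g d)
include h

lemma congr {f' : ℝ → ℝ} (hff' : EqOn f f' (Ici 0)) : IsFace f' m k g d where
  pos := h.pos
  lt := h.lt
  le u hu := hff' hu ▸ h.le u hu
  eq_left := hff' h.pos.le ▸ h.eq_left
  eq_right := hff' (h.pos.trans h.lt).le ▸ h.eq_right
  lt_of_mem_Ioo u hu := hff' (h.pos.trans hu.1).le ▸ h.lt_of_mem_Ioo u hu

lemma hasConcaveMajorant : HasConcaveMajorant f := .of_le_affine h.le

lemma concaveMajorant_eq (hu : u ∈ Icc g d) : concaveMajorant f u = m + k * u := by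
  have hg := h.pos.le
  have hd := hg.trans h.lt.le
  refine (concaveMajorant_le_affine h.le (hg.trans hu.1)).antisymm
    (affine_le_concaveOn_of_mem_Icc h.hasConcaveMajorant.concaveOn_concaveMajorant hg hd ?_ ?_ hu)
  · exact h.eq_left ▸ h.hasConcaveMajorant.le_concaveMajorant hg
  · exact h.eq_right ▸ h.hasConcaveMajorant.le_concaveMajorant hd

lemma rightDeriv_concaveMajorant (hu : u ∈ Ico g d) : rightDeriv (concaveMajorant f) u = k :=
  rightDeriv_eq_of_eqOn_affine hu.2 fun _ hv => h.concaveMajorant_eq ⟨hu.1.trans hv.1, hv.2⟩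

lemma firstVertex_eq (hu : u ∈ Ioo g d) : firstVertex f u = d := by
  have hd : u ≤ d ∧ concaveMajorant f d = f d :=
    ⟨hu.2.le, by rw [h.concaveMajorant_eq ⟨h.lt.le, le_rfl⟩, h.eq_right]⟩
  refine le_antisymm (csInf_le ⟨u, fun v hv => hv.1⟩ hd) (le_csInf ⟨d, hd⟩ ?_)
  rintro v ⟨huv, hv⟩
  by_contra! hvd
  exact (h.lt_of_mem_Ioo v ⟨hu.1.trans_le huv, hvd⟩).ne
    (hv.symm.trans (h.concaveMajorant_eq ⟨hu.1.le.trans huv, hvd.le⟩))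

end IsFace

end Faces

section TypicalPaths

/-- The almost sure properties of Brownian paths that force their least concave majorants to
consist of faces. -/
structure IsTypicalPath (f : ℝ → ℝ) : Prop where
  continuousOn : ContinuousOn f (Ici 0)
  map_zero : f 0 = 0
  sublinear : ∀ ε > 0, ∃ A, ∀ u, 0 ≤ u → |f u| ≤ A + ε * u
  unbounded : ∀ C, ∃ u, 0 ≤ u ∧ C < f u
  steep : ∀ C, ∃ u, 0 < u ∧ C * u < f u

namespace IsTypicalPath

variable {f : ℝ → ℝ} {s : ℝ} (h : IsTypicalPath f)
include h

lemma hasConcaveMajorant : HasConcaveMajorant f := by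
  obtain ⟨A, hA⟩ := h.sublinear 1 one_pos
  exact .of_le_affine fun u hu => (le_abs_self _).trans (hA u hu)

lemma rightDeriv_concaveMajorant_pos (hs : 0 < s) : 0 < rightDeriv (concaveMajorant f) s := by
  by_contra! hslope
  obtain ⟨u, hu, hfu⟩ :=
    h.unbounded (concaveMajorant f s - rightDeriv (concaveMajorant f) s * s)
  have hKu := h.hasConcaveMajorant.le_concaveMajorant hu
  have htangent := h.hasConcaveMajorant.concaveMajorant_le_tangent hs hu
  linarith [mul_nonpos_of_nonpos_of_nonneg hslope hu]

lemma concaveMajorant_pos (hs : 0 < s) : 0 < concaveMajorant f s := by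
  have htangent := h.hasConcaveMajorant.concaveMajorant_le_tangent hs le_rfl
  rw [h.hasConcaveMajorant.concaveMajorant_zero, h.map_zero] at htangent
  linarith [mul_pos (h.rightDeriv_concaveMajorant_pos hs) hs]

lemma exists_contact_ge (hs : 0 < s) : ∃ u, s ≤ u ∧ concaveMajorant f u = f u := by
  by_contra! hno
  have hf := h.hasConcaveMajorant
  set κ := rightDeriv (concaveMajorant f) s with hκ_def
  have hκ : 0 < κ := h.rightDeriv_concaveMajorant_pos hs
  obtain ⟨A, hA⟩ := h.sublinear (κ / 2) (by positivity)
  have hbound : ∀ t, s < t → concaveMajorant f s + κ * (t - s) ≤ A + κ / 2 * t := fun t hst => by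
    obtain ⟨g, hg, -, hline⟩ := hf.exists_eqOn_affine_of_no_contact h.continuousOn hs hst
      fun u hu => (hf.le_concaveMajorant (hs.le.trans hu.1)).lt_of_ne' (hno u hu.1)
    have hKs := hline ⟨hg.2.le, hst.le⟩
    have hKt := hline ⟨(hg.2.trans hst).le, le_rfl⟩
    have hle := concaveMajorant_le_affine (fun u hu => (le_abs_self _).trans (hA u hu))
      (hs.trans hst).le
    simp only [← hκ_def] at hKs hKt
    linarith
  have hlarge := hbound (max (s + 1) (2 * (A + κ * s) / κ)) (by simp)
  have hmax : 2 * (A + κ * s) ≤ max (s + 1) (2 * (A + κ * s) / κ) * κ :=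
    (div_le_iff₀ hκ).1 (le_max_right _ _)
  linarith [h.concaveMajorant_pos hs]

lemma exists_isFace (hs : 0 < s) (hfs : f s < 0) :
    ∃ m k g d, IsFace f m k g d ∧ s ∈ Ioo g d := by
  have hf := h.hasConcaveMajorant
  set d := firstVertex f s
  obtain ⟨hsd, hd⟩ : s ≤ d ∧ concaveMajorant f d = f d :=
    (hf.isClosed_contact h.continuousOn hs).csInf_mem (h.exists_contact_ge hs)
      ⟨s, fun _ hu => hu.1⟩
  have hsd' : s < d := hsd.lt_of_ne fun hsd => by
    rw [← hsd] at hd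
    linarith [h.concaveMajorant_pos hs]
  have hgap : ∀ u ∈ Ico s d, f u < concaveMajorant f u := fun u hu =>
    (hf.le_concaveMajorant (hs.le.trans hu.1)).lt_of_ne'
      (ne_of_lt_firstVertex hu.2 hu.1 le_rfl)
  obtain ⟨g, hg, hgap', hline⟩ :=
    hf.exists_eqOn_affine_of_no_contact h.continuousOn hs hsd' hgap
  set k := rightDeriv (concaveMajorant f) s
  have hle : ∀ u, 0 ≤ u → f u ≤ (f g - k * g) + k * u := fun u hu => by
    have hKs := hline ⟨hg.2.le, hsd⟩
    have htangent := hf.concaveMajorant_le_tangent hs hu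
    have hfu := hf.le_concaveMajorant hu
    linarith
  have hgpos : 0 < g := hg.1.lt_of_ne fun hg0 => by
    obtain ⟨u, hu, hku⟩ := h.steep k
    have hfu := hle u hu.le
    rw [← hg0, h.map_zero] at hfu
    linarith
  exact ⟨f g - k * g, k, g, d,
    { pos := hgpos
      lt := hg.2.trans hsd'
      le := hle
      eq_left := by ring
      eq_right := hd ▸ hline ⟨(hg.2.trans hsd').le, le_rfl⟩
      lt_of_mem_Ioo := fun u hu => (hgap' u hu).trans_eq (hline (Ioo_subset_Icc_self hu)) },
    hg.2, hsd'⟩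

end IsTypicalPath

end TypicalPaths

section RationalPolygons

/-- The rational combinations of the functions `u ↦ min q u`, for `0 ≤ q` rational. On `[0, ∞)`,
these are the polygonal paths started at `0`, eventually constant, with rational vertices. They
are countably many, and each is a Cameron–Martin path of Brownian motion. -/
def rationalPolygons : Submodule ℚ (ℝ → ℝ) :=
  Submodule.span ℚ (range fun (q : ℚ≥0) (u : ℝ) => min (q : ℝ) u)

lemma countable_rationalPolygons : (rationalPolygons : Set (ℝ → ℝ)).Countable :=
  inferInstanceAs (Countable (Submodule.span ℚ (range _)))

lemma min_mem_rationalPolygons {q : ℚ} (hq : 0 ≤ q) :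
    (fun u => min (q : ℝ) u) ∈ rationalPolygons :=
  Submodule.subset_span ⟨⟨q, hq⟩, rfl⟩

lemma continuous_of_mem_rationalPolygons {φ : ℝ → ℝ} (hφ : φ ∈ rationalPolygons) :
    Continuous φ := by
  induction hφ using Submodule.span_induction with
  | mem φ h =>
    obtain ⟨q, rfl⟩ := h
    fun_prop
  | zero => exact continuous_zero
  | add φ ψ _ _ hφ hψ => exact hφ.add hψ
  | smul a φ _ hφ => exact hφ.const_smul a

lemma tent_mem_rationalPolygons {x δ : ℚ} (e : ℚ) (hδ : 0 < δ) (hδx : δ ≤ x) :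
    (fun u : ℝ => e * max 0 (1 - |u - x| / δ)) ∈ rationalPolygons := by
  have hmem : (e / δ) • ((2 : ℚ) • (fun u => min (x : ℝ) u) -
      (fun u => min ((x - δ : ℚ) : ℝ) u) - fun u => min ((x + δ : ℚ) : ℝ) u) ∈ rationalPolygons :=
    Submodule.smul_mem _ _ (Submodule.sub_mem _ (Submodule.sub_mem _
      (Submodule.smul_mem _ _ (min_mem_rationalPolygons (by linarith)))
      (min_mem_rationalPolygons (by linarith))) (min_mem_rationalPolygons (by linarith)))
  convert hmem using 1
  ext u
  have hδ' : (0 : ℝ) < δ := by exact_mod_cast hδ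
  have htent : max 0 (1 - |u - x| / δ) = max 0 (δ - |u - x|) / δ := by
    rw [← max_div_div_right hδ'.le, zero_div, sub_div, div_self hδ'.ne']
  have hmax : max 0 (δ - |u - x|) = 2 * min (x : ℝ) u - min (x - δ : ℝ) u - min (x + δ : ℝ) u := by
    grind
  simp only [Pi.smul_apply, Pi.sub_apply, Rat.smul_def, htent, hmax]
  push_cast
  ring

lemma exists_bump_mem_rationalPolygons {x δ : ℚ} (e : ℚ) (hδ : 0 < δ) (hδx : δ ≤ x) :
    ∃ φ ∈ rationalPolygons, φ x = e ∧ (∀ u, φ u ≤ max (e : ℝ) 0) ∧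
      ∀ u : ℝ, (δ : ℝ) ≤ |u - x| → φ u = 0 := by
  have hδ' : (0 : ℝ) < δ := by exact_mod_cast hδ
  refine ⟨_, tent_mem_rationalPolygons e hδ hδx, by simp, fun u => ?_, fun u hu => ?_⟩
  · have h0 : (0 : ℝ) ≤ max 0 (1 - |u - x| / δ) := le_max_left _ _
    have h1 : max 0 (1 - |u - x| / δ) ≤ 1 := max_le zero_le_one (sub_le_self _ (by positivity))
    rcases le_total (e : ℝ) 0 with he | he
    · exact (mul_nonpos_of_nonpos_of_nonneg he h0).trans (le_max_right _ _)
    · exact (mul_le_of_le_one_right he h1).trans (le_max_left _ _)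
  · simp only [max_eq_left (sub_nonpos.2 ((one_le_div hδ').2 hu)), mul_zero]

end RationalPolygons

section FacePerturbations

namespace IsFace

variable {f : ℝ → ℝ} {m k g d : ℝ} (h : IsFace f m k g d)
include h

lemma exists_lift (a : ℚ) (ha : 0 ≤ a) :
    ∃ φ ∈ rationalPolygons, IsFace (f + φ) (m + a) k g d ∧ ∀ u, g ≤ u → φ u = a := by
  obtain ⟨p, hp, hpg⟩ := exists_rat_btwn h.pos
  obtain ⟨φ, hφ_mem, hφ⟩ : ∃ φ ∈ rationalPolygons, ∀ u, φ u = a / p * min (p : ℝ) u :=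
    ⟨(a / p) • fun u => min (p : ℝ) u,
      Submodule.smul_mem _ _ (min_mem_rationalPolygons (by exact_mod_cast hp.le)),
      fun u => by simp [Rat.smul_def]⟩
  have heq : ∀ u, g ≤ u → φ u = a := fun u hu => by
    rw [hφ, min_eq_left (hpg.le.trans hu), div_mul_cancel₀ _ hp.ne']
  have hle : ∀ u, φ u ≤ a := fun u => by
    have ha' : (0 : ℝ) ≤ a / p := div_nonneg (by exact_mod_cast ha) hp.le
    calc φ u = a / p * min (p : ℝ) u := hφ u
      _ ≤ a / p * p := mul_le_mul_of_nonneg_left (min_le_left _ _) ha'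
      _ = a := div_mul_cancel₀ _ hp.ne'
  refine ⟨φ, hφ_mem, ?_, heq⟩
  exact
    { pos := h.pos
      lt := h.lt
      le := fun u hu => by linarith [h.le u hu, hle u, Pi.add_apply f φ u]
      eq_left := by rw [Pi.add_apply, heq g le_rfl, h.eq_left]; ring
      eq_right := by rw [Pi.add_apply, heq d h.lt.le, h.eq_right]; ring
      lt_of_mem_Ioo := fun u hu => by
        linarith [h.lt_of_mem_Ioo u hu, hle u, Pi.add_apply f φ u] }

lemma exists_bump (hf : ContinuousOn f (Ici 0)) {x e : ℚ} (hx : (x : ℝ) ∈ Ioo g d)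
    (he : f x + e < m + k * x) {y : ℝ} (hyx : y ≠ x) :
    ∃ φ ∈ rationalPolygons, IsFace (f + φ) m k g d ∧ φ x = e ∧ φ y = 0 := by
  have hx0 : (0 : ℝ) < x := h.pos.trans hx.1
  have hnear : ∀ᶠ u in 𝓝 (x : ℝ), u ∈ Ioo g d ∧ u ≠ y ∧ f u + max (e : ℝ) 0 < m + k * u := by
    have hfx : ContinuousAt f x := hf.continuousAt (Ici_mem_nhds hx0)
    have hgap : f x + max (e : ℝ) 0 < m + k * x := by
      rw [← max_add_add_left, add_zero]
      exact max_lt he (h.lt_of_mem_Ioo x hx)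
    filter_upwards [Ioo_mem_nhds hx.1 hx.2, eventually_ne_nhds hyx.symm,
      (hfx.add_const (max (e : ℝ) 0)).eventually_lt
        (by fun_prop : ContinuousAt (fun u : ℝ => m + k * u) x) hgap] with u h₁ h₂ h₃
    exact ⟨h₁, h₂, h₃⟩
  obtain ⟨ε, hε, hball⟩ := Metric.eventually_nhds_iff.1 hnear
  obtain ⟨δ, hδ, hδε⟩ := exists_rat_btwn (lt_min hε hx0)
  obtain ⟨φ, hφ_mem, hφx, hφ_le, hφ_far⟩ := exists_bump_mem_rationalPolygons e
    (by exact_mod_cast hδ) (by exact_mod_cast hδε.le.trans (min_le_right _ _) : δ ≤ x)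
  have hφ0 : ∀ u, ¬ (u ∈ Ioo g d ∧ u ≠ y ∧ f u + max (e : ℝ) 0 < m + k * u) → φ u = 0 :=
    fun u hu => hφ_far u ((hδε.le.trans (min_le_left _ _)).trans
      (not_lt.1 fun hlt => hu (hball hlt)))
  have hadd : ∀ u, (f + φ) u = f u ∨ (f + φ) u < m + k * u := fun u => by
    by_cases hu : u ∈ Ioo g d ∧ u ≠ y ∧ f u + max (e : ℝ) 0 < m + k * u
    · exact .inr (by linarith [hφ_le u, hu.2.2, Pi.add_apply f φ u])
    · exact .inl (by simp [hφ0 u hu])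
  refine ⟨φ, hφ_mem, ?_, hφx, hφ0 y (by simp)⟩
  exact
    { pos := h.pos
      lt := h.lt
      le := fun u hu => (hadd u).elim (fun hu' => hu' ▸ h.le u hu) le_of_lt
      eq_left := by simp [hφ0 g (by simp), h.eq_left]
      eq_right := by simp [hφ0 d (by simp), h.eq_right]
      lt_of_mem_Ioo := fun u hu => (hadd u).elim (fun hu' => hu' ▸ h.lt_of_mem_Ioo u hu) id }

end IsFace

end FacePerturbations

section BrownianPaths

open scoped NNReal ENNReal

lemma measurable_natSigma {Ω E : Type*} [MeasurableSpace E] (Y : ℝ → Ω → E) {u s : ℝ}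
    (hu : u ∈ Icc 0 s) : Measurable[natSigma Y s] (Y u) :=
  measurable_iff_comap_le.2
    (le_iSup (fun u : Icc (0 : ℝ) s => MeasurableSpace.comap (Y u) inferInstance) ⟨u, hu⟩)

lemma isOpenPosMeasure_gaussianReal (μ : ℝ) {v : ℝ≥0} (hv : v ≠ 0) :
    (gaussianReal μ v).IsOpenPosMeasure :=
  (gaussianReal_absolutelyContinuous' μ hv).isOpenPosMeasure

lemma exists_abs_le_add_mul_of_tendsto_div {f : ℝ → ℝ} (hf : ContinuousOn f (Ici 0))
    (hlim : Tendsto (fun r : ℚ≥0 => f r / r) atTop (𝓝 0)) {ε : ℝ} (hε : 0 < ε) :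
    ∃ A, ∀ u, 0 ≤ u → |f u| ≤ A + ε * u := by
  obtain ⟨R, hR⟩ := eventually_atTop.1 ((Metric.tendsto_nhds.1 hlim) ε hε)
  obtain ⟨A, hA⟩ := (isCompact_Icc (a := (0 : ℝ)) (b := R)).exists_bound_of_continuousOn
    (hf.mono fun _ hu => hu.1)
  have hA0 : 0 ≤ A := (norm_nonneg _).trans (hA 0 ⟨le_rfl, R.cast_nonneg⟩)
  refine ⟨A, fun u hu => ?_⟩
  rcases le_or_gt u R with huR | hRu
  · linarith [hA u ⟨hu, huR⟩, mul_nonneg hε.le hu, Real.norm_eq_abs (f u)]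
  · suffices |f u| - ε * u ≤ 0 by linarith
    refine le_of_forall_rat_mem_Ioo_le (F := fun v => |f v| - ε * v) (lt_add_one u) ?_
      fun r hr => ?_
    · exact ((hf u hu).mono fun v hv => hu.trans hv.1.le).abs.sub (by fun_prop)
    · have hr0 : (0 : ℝ) < r := hu.trans_lt hr.1
      lift r to ℚ≥0 using by exact_mod_cast hr0.le
      have hdiv := hR r (by exact_mod_cast (hRu.trans hr.1).le)
      rw [dist_zero_right, Real.norm_eq_abs, abs_div,
        abs_of_nonneg (r.cast_nonneg (α := ℝ))] at hdiv
      push_cast at hr0 ⊢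
      linarith [(div_lt_iff₀ hr0).1 hdiv]

variable {Ω : Type*} [MeasurableSpace Ω] {P : Measure Ω} {B : ℝ → Ω → ℝ}

lemma map_eq_map_of_isPreBrownianReal [IsFiniteMeasure P] {ι : Type*} [Countable ι]
    {X Y : ℝ≥0 → Ω → ℝ} (hX : IsPreBrownianReal X P) (hY : IsPreBrownianReal Y P) (c : ι → ℝ≥0) :
    P.map (fun ω i => X (c i) ω) = P.map fun ω i => Y (c i) ω := by
  refine (map_eq_iff_forall_finset_map_restrict_eq
    (aemeasurable_pi_lambda _ fun _ => hX.aemeasurable _)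
    (aemeasurable_pi_lambda _ fun _ => hY.aemeasurable _)).2 fun I => ?_
  let J : Finset ℝ≥0 := I.image c
  let F : (J → ℝ) → I → ℝ := fun x i => x ⟨c i, Finset.mem_image_of_mem c i.2⟩
  have hF : Measurable F := by fun_prop
  have hmap {Z : ℝ≥0 → Ω → ℝ} (hZ : IsPreBrownianReal Z P) :
      P.map (fun ω => I.restrict fun i => Z (c i) ω) =
        (BrownianReal.projectiveFamily J).map F := by
    rw [← (hZ.hasLaw J).map_eq,
      AEMeasurable.map_map_of_aemeasurable hF.aemeasurable (hZ.hasLaw J).aemeasurable]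
    rfl
  rw [hmap hX, hmap hY]

/-- The restriction of the path of `B` to the nonnegative rational times, a random element of a
countable product, hence of a standard Borel space. -/
def ratPath (B : ℝ → Ω → ℝ) (ω : Ω) : ℚ≥0 → ℝ := fun r => B r ω

namespace IsBrownianMotion

variable (hB : IsBrownianMotion P B)
include hB

lemma measurable_ratPath : Measurable (ratPath B) :=
  measurable_pi_lambda _ fun _ => hB.measurable _

lemma measure_lt_increment {s σ : ℝ} (hs : 0 ≤ s) (hσ : 0 < σ) (c : ℝ) :
    P {ω | σ * c < B (s + σ ^ 2) ω - B s ω} = gaussianReal 0 1 (Ioi c) := by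
  have hlaw := hB.incr_law s (s + σ ^ 2) hs (by nlinarith)
  rw [add_sub_cancel_left, Real.toNNReal_of_nonneg (sq_nonneg σ)] at hlaw
  have hscale := gaussianReal_map_const_mul (μ := 0) (v := 1) σ
  rw [mul_zero, mul_one] at hscale
  have hmeas : Measurable fun ω => B (s + σ ^ 2) ω - B s ω :=
    (hB.measurable _).sub (hB.measurable _)
  have hmap : P.map (fun ω => B (s + σ ^ 2) ω - B s ω) (Ioi (σ * c)) =
      (gaussianReal 0 1).map (σ * ·) (Ioi (σ * c)) := by rw [hlaw, hscale]
  rw [Measure.map_apply hmeas measurableSet_Ioi,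
    Measure.map_apply (by fun_prop) measurableSet_Ioi] at hmap
  simpa [preimage, Ioi, hσ] using hmap

variable [IsProbabilityMeasure P]

lemma iIndepFun_increments {t : ℕ → ℝ} (ht0 : ∀ i, 0 ≤ t i) (ht : Monotone t) :
    iIndepFun (fun i ω => B (t (i + 1)) ω - B (t i) ω) P := by
  rw [iIndepFun_iff]
  intro S
  induction S using Finset.induction_on_max with
  | empty => simp
  | insert a S hmax ih =>
    intro E hE
    rw [Finset.prod_insert fun ha => (hmax a ha).false,
      ← ih fun i hi => hE i (Finset.mem_insert_of_mem hi), Finset.set_biInter_insert]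
    refine (Indep_iff _ _ _).1 (hB.incr_indep (t a) (t (a + 1)) (ht0 a) (ht a.le_succ)) _ _
      (hE a (Finset.mem_insert_self a S)) (Finset.measurableSet_biInter _ fun i hi => ?_)
    have hpast : Measurable[natSigma B (t a)] fun ω => B (t (i + 1)) ω - B (t i) ω :=
      (measurable_natSigma B ⟨ht0 _, ht (hmax i hi)⟩).sub
        (measurable_natSigma B ⟨ht0 _, ht (hmax i hi).le⟩)
    exact hpast.comap_le _ (hE i (Finset.mem_insert_of_mem hi))

lemma isPreBrownianReal : IsPreBrownianReal (fun (t : ℝ≥0) ω => B t ω) P := by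
  refine HasIndepIncrements.isPreBrownianReal_of_hasLaw (fun t => ?_) ?_
  · refine ⟨(hB.measurable _).aemeasurable, ?_⟩
    have hlaw := hB.incr_law 0 t le_rfl t.2
    rw [sub_zero, Real.toNNReal_coe] at hlaw
    rw [← hlaw]
    refine Measure.map_congr ?_
    filter_upwards [hB.init] with ω hω
    simp [hω]
  · exact hasIndepIncrements_iff_nat.2 fun t ht =>
      hB.iIndepFun_increments (fun i => (t i).2) fun i j hij => ht hij

lemma ae_inv_ratPath_mem_iff {S : Set (ℚ≥0 → ℝ)} (hS : MeasurableSet S) :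
    (∀ᵐ ω ∂P, (fun r : ℚ≥0 => r * B (1 / r) ω) ∈ S) ↔ ∀ᵐ ω ∂P, ratPath B ω ∈ S := by
  have hmeas := hB.measurable
  have hlaw : P.map (fun ω (r : ℚ≥0) => (r : ℝ) * B (1 / r) ω) = P.map (ratPath B) :=
    map_eq_map_of_isPreBrownianReal hB.isPreBrownianReal.inv
      hB.isPreBrownianReal fun r : ℚ≥0 => ⟨r, r.cast_nonneg⟩
  have hinv := ae_map_iff (μ := P) (f := fun ω (r : ℚ≥0) => (r : ℝ) * B (1 / r) ω)
    (by fun_prop) hS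
  rw [hlaw] at hinv
  exact hinv.symm.trans (ae_map_iff hB.measurable_ratPath.aemeasurable hS)

lemma ae_sublinear :
    ∀ᵐ ω ∂P, ∀ ε > 0, ∃ A, ∀ u, 0 ≤ u → |B u ω| ≤ A + ε * u := by
  have hS : MeasurableSet {x : ℚ≥0 → ℝ | Tendsto (fun r : ℚ≥0 => x r / r) atTop (𝓝 0)} :=
    measurableSet_tendsto _ fun r => (measurable_pi_apply r).div_const _
  have hinv : ∀ᵐ ω ∂P, Tendsto (fun r : ℚ≥0 => r * B (1 / r) ω / r) atTop (𝓝 0) := by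
    filter_upwards [hB.cont, hB.init] with ω hcont h0
    have hB0 : Tendsto (fun r : ℚ≥0 => B (1 / r) ω) atTop (𝓝 0) := by
      rw [← h0]
      refine (hcont 0 self_mem_Ici).tendsto.comp (tendsto_nhdsWithin_iff.2 ⟨?_, ?_⟩)
      · have hcast : Tendsto (fun r : ℚ≥0 => (r : ℝ)) atTop atTop :=
          tendsto_atTop_atTop_of_monotone NNRat.cast_mono fun x =>
            let ⟨n, hn⟩ := exists_nat_ge x
            ⟨n, by simpa using hn⟩
        simpa [Function.comp_def] using tendsto_inv_atTop_zero.comp hcast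
      · exact .of_forall fun r => by simp [r.cast_nonneg]
    refine hB0.congr' ((eventually_gt_atTop 0).mono fun r hr => ?_)
    field_simp
  filter_upwards [hB.cont, (hB.ae_inv_ratPath_mem_iff hS).1 hinv] with ω hcont hlim ε hε
  exact exists_abs_le_add_mul_of_tendsto_div hcont hlim hε

lemma ae_frequently_lt_increment {τ : ℕ → ℝ} (hτ : ∀ n, 0 < τ n)
    (hτsucc : ∀ n, τ (n + 1) = τ n + τ n ^ 2) (c : ℝ) :
    ∀ᵐ ω ∂P, ∃ᶠ n in atTop, τ n * c < B (τ (n + 1)) ω - B (τ n) ω := by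
  have hindep := hB.iIndepFun_increments (fun i => (hτ i).le)
    (monotone_nat_of_le_succ fun n => by nlinarith [hτsucc n, hτ n])
  let E : ℕ → Set Ω := fun n => {ω | τ n * c < B (τ (n + 1)) ω - B (τ n) ω}
  have hE : ∀ n, MeasurableSet (E n) := fun n =>
    measurableSet_lt measurable_const ((hB.measurable _).sub (hB.measurable _))
  have hEindep : iIndepSet E P := (iIndepSet_iff_meas_biInter hE).2 fun S =>
    hindep.meas_biInter fun i _ => ⟨Ioi (τ i * c), measurableSet_Ioi, rfl⟩
  have hPE : ∀ n, P (E n) = gaussianReal 0 1 (Ioi c) := fun n => by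
    simp only [E, hτsucc, hB.measure_lt_increment (hτ n).le (hτ n)]
  have := isOpenPosMeasure_gaussianReal 0 one_ne_zero
  have hsum : ∑' n, P (E n) = ∞ := by
    simp only [hPE]
    exact ENNReal.tsum_const_eq_top_of_ne_zero (isOpen_Ioi.measure_pos _ nonempty_Ioi).ne'
  have hlimsup := measure_limsup_eq_one hE hEindep hsum
  rw [← mem_ae_iff_prob_eq_one (MeasurableSet.measurableSet_limsup hE)] at hlimsup
  filter_upwards [hlimsup] with ω hω
  exact mem_limsup_iff_frequently_mem.1 hω

lemma ae_unbounded : ∀ᵐ ω ∂P, ∀ C, ∃ r : ℚ≥0, C < B r ω := by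
  -- The increment over `[τ, τ + τ ^ 2]` has standard deviation `τ`, so it can beat `|B τ| ≤ A + τ`.
  let τ : ℕ → ℕ := fun n => (fun k => k + k ^ 2)^[n] 1
  have hτsucc : ∀ n, τ (n + 1) = τ n + τ n ^ 2 := fun n => Function.iterate_succ_apply' _ _ _
  have hτpos : ∀ n, 0 < τ n := fun n => by
    induction n with
    | zero => exact one_pos
    | succ n ih => rw [hτsucc]; positivity
  have hτmono : StrictMono τ := strictMono_nat_of_lt_succ fun n =>
    hτsucc n ▸ Nat.lt_add_of_pos_right (pow_pos (hτpos n) 2)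
  have hτlim : Tendsto (fun n => (τ n : ℝ)) atTop atTop :=
    tendsto_natCast_atTop_atTop.comp hτmono.tendsto_atTop
  filter_upwards [hB.ae_sublinear, hB.ae_frequently_lt_increment (τ := fun n => τ n)
    (fun n => by exact_mod_cast hτpos n) (fun n => by exact_mod_cast hτsucc n) 2]
    with ω hsub hfreq C
  obtain ⟨A, hA⟩ := hsub 1 one_pos
  obtain ⟨n, hincr, hn⟩ := (hfreq.and_eventually (hτlim.eventually_gt_atTop (C + A))).exists
  refine ⟨τ (n + 1), ?_⟩
  have hlow := (abs_le.1 (hA (τ n) (Nat.cast_nonneg _))).1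
  rw [NNRat.cast_natCast]
  linarith

lemma ae_steep : ∀ᵐ ω ∂P, ∀ C, ∃ u, 0 < u ∧ C * u < B u ω := by
  have hS : MeasurableSet {x : ℚ≥0 → ℝ | ∀ n : ℕ, ∃ r, (n : ℝ) < x r} := by
    simp only [ofPred_forall, ofPred_exists]
    measurability
  have hunbounded : ∀ᵐ ω ∂P, ∀ n : ℕ, ∃ r : ℚ≥0, (n : ℝ) < B r ω :=
    hB.ae_unbounded.mono fun ω hω n => hω n
  filter_upwards [(hB.ae_inv_ratPath_mem_iff hS).2 hunbounded] with ω hω C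
  obtain ⟨n, hn⟩ := exists_nat_ge C
  obtain ⟨r, hr⟩ := hω n
  have hr0 : (0 : ℝ) < r := r.cast_nonneg.lt_of_ne' fun h0 => by
    simp [h0, (Nat.cast_nonneg n).not_gt] at hr
  refine ⟨1 / r, by positivity, ?_⟩
  calc C * (1 / r) ≤ n * (1 / r) := by gcongr
    _ < B (1 / r) ω := by rw [mul_one_div, div_lt_iff₀' hr0]; exact hr

lemma ae_isTypicalPath : ∀ᵐ ω ∂P, IsTypicalPath fun u => B u ω := by
  filter_upwards [hB.cont, hB.init, hB.ae_sublinear, hB.ae_unbounded, hB.ae_steep]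
    with ω hcont h0 hsub hunb hsteep
  refine ⟨hcont, h0, hsub, fun C => ?_, hsteep⟩
  obtain ⟨r, hr⟩ := hunb C
  exact ⟨r, r.cast_nonneg, hr⟩

end IsBrownianMotion

end BrownianPaths

section QuasiInvariance

variable {Ω ι : Type*} [MeasurableSpace Ω] {P : Measure Ω} {X : ι → Ω → ℝ}

/-- `φ` is a *quasi-invariant shift* of the process `X`: the law of `X + φ` is absolutely
continuous with respect to the law of `X` (on the product `σ`-algebra). -/
def IsQuasiInvariantShift (P : Measure Ω) (X : ι → Ω → ℝ) (φ : ι → ℝ) : Prop :=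
  P.map (fun ω i => X i ω + φ i) ≪ P.map fun ω i => X i ω

lemma isQuasiInvariantShift_zero : IsQuasiInvariantShift P X 0 := by
  simp [IsQuasiInvariantShift, Measure.AbsolutelyContinuous.rfl]

lemma IsQuasiInvariantShift.add (hX : ∀ i, Measurable (X i)) {φ ψ : ι → ℝ}
    (hφ : IsQuasiInvariantShift P X φ) (hψ : IsQuasiInvariantShift P X ψ) :
    IsQuasiInvariantShift P X (φ + ψ) := by
  refine Measure.AbsolutelyContinuous.trans ?_ hψ
  have hmap := hφ.map (f := fun (x : ι → ℝ) i => x i + ψ i) (by fun_prop)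
  rw [Measure.map_map (by fun_prop) (by fun_prop),
    Measure.map_map (by fun_prop) (by fun_prop)] at hmap
  simpa only [IsQuasiInvariantShift, Function.comp_def, Pi.add_apply, add_assoc] using hmap

lemma isQuasiInvariantShift_of_indepFun [IsFiniteMeasure P] {ξ : Ω → ℝ} {Y : ι → Ω → ℝ}
    (hξ : Measurable ξ) (hY : ∀ i, Measurable (Y i)) (hind : IndepFun ξ (fun ω i => Y i ω) P)
    {c : ℝ} (hac : P.map (fun ω => ξ ω + c) ≪ P.map ξ) (w : ι → ℝ) :
    IsQuasiInvariantShift P (fun i ω => Y i ω + ξ ω * w i) fun i => c * w i := by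
  let Φ : ℝ × (ι → ℝ) → ι → ℝ := fun z i => z.2 i + z.1 * w i
  have hΦ : Measurable Φ := by fun_prop
  have hYm : Measurable fun ω i => Y i ω := by fun_prop
  have hmap {ξ' : Ω → ℝ} (hξ' : Measurable ξ') (hind' : IndepFun ξ' (fun ω i => Y i ω) P) :
      P.map (fun ω i => Y i ω + ξ' ω * w i) =
        ((P.map ξ').prod (P.map fun ω i => Y i ω)).map Φ := by
    rw [← (indepFun_iff_map_prod_eq_prod_map_map hξ'.aemeasurable hYm.aemeasurable).1 hind',
      Measure.map_map hΦ (hξ'.prodMk hYm)]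
    rfl
  have hshift := hmap (hξ.add_const c)
    (hind.comp (φ := (· + c)) (measurable_add_const c) measurable_id)
  simp only [add_mul, ← add_assoc] at hshift
  rw [IsQuasiInvariantShift, hshift, hmap hξ hind]
  exact (hac.prod .rfl).map hΦ

lemma indepFun_sub_cov_div_var_mul [IsProbabilityMeasure P] (hX : IsGaussianProcess X P)
    (hm : ∀ i, Measurable (X i)) {i : ι} (hi : Var[X i; P] ≠ 0) :
    IndepFun (X i) (fun ω j => X j ω - X i ω * (cov[X i, X j; P] / Var[X i; P])) P := by
  let w : ι → ℝ := fun j => cov[X i, X j; P] / Var[X i; P]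
  have hindep : IndepFun (fun ω (_ : Unit) => X i ω) (fun ω j => X j ω - w j * X i ω) P := by
    refine IsGaussianProcess.indepFun_of_covariance_eq_zero (hX.of_isGaussianProcess ?_)
      (fun _ => (hm i).aemeasurable) (fun j => by fun_prop) fun _ j => ?_
    · rintro (_ | j)
      · exact ⟨{i}, ContinuousLinearMap.proj ⟨i, by simp⟩, fun _ => rfl⟩
      · exact ⟨{i, j}, ContinuousLinearMap.proj ⟨j, by simp⟩ -
          w j • ContinuousLinearMap.proj ⟨i, by simp⟩, fun _ => rfl⟩
    · have hL2 : ∀ j, MemLp (X j) 2 P := fun j => (hX.hasGaussianLaw_eval j).memLp_two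
      rw [covariance_fun_sub_right (hL2 i) (hL2 j) ((hL2 i).const_mul _),
        covariance_const_mul_right, covariance_self (hm i).aemeasurable, div_mul_cancel₀ _ hi,
        sub_self]
  simpa [Function.comp_def, w, mul_comm] using
    hindep.comp (φ := fun x => x ()) (ψ := id) (by fun_prop) measurable_id

lemma isQuasiInvariantShift_mul_covariance [IsProbabilityMeasure P] (hX : IsGaussianProcess X P)
    (hm : ∀ i, Measurable (X i)) {i : ι} (hi : Var[X i; P] ≠ 0) (c : ℝ) :
    IsQuasiInvariantShift P X fun j => c * cov[X i, X j; P] := by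
  have hlaw := (hX.hasGaussianLaw_eval i).map_eq_gaussianReal
  set μ := P[X i]
  set v := Var[X i; P].toNNReal
  have hv : v ≠ 0 := (Real.toNNReal_pos.2 ((variance_nonneg _ _).lt_of_ne' hi)).ne'
  have hac : P.map (fun ω => X i ω + c * Var[X i; P]) ≪ P.map (X i) := by
    have : P.map (fun ω => X i ω + c * Var[X i; P]) = gaussianReal (μ + c * Var[X i; P]) v := by
      rw [← gaussianReal_map_add_const, ← hlaw, Measure.map_map (by fun_prop) (hm i)]
      rfl
    rw [this, hlaw]
    exact (gaussianReal_absolutelyContinuous _ hv).trans (gaussianReal_absolutelyContinuous' _ hv)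
  have := isQuasiInvariantShift_of_indepFun (hm i) (by fun_prop)
    (indepFun_sub_cov_div_var_mul hX hm hi) hac fun j => cov[X i, X j; P] / Var[X i; P]
  simpa [mul_assoc, mul_div_cancel₀ _ hi] using this

end QuasiInvariance

section Transfer

open scoped NNReal

variable {Ω : Type*} [MeasurableSpace Ω] {P : Measure Ω} [IsProbabilityMeasure P]
  {B : ℝ → Ω → ℝ}

lemma IsBrownianMotion.isQuasiInvariantShift_mul_min (hB : IsBrownianMotion P B) (q : ℚ≥0)
    (c : ℝ) : IsQuasiInvariantShift P (fun r : ℚ≥0 => B r) fun r => c * min (q : ℝ) r := by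
  have hpre := hB.isPreBrownianReal
  have hcov : ∀ r s : ℚ≥0, cov[B r, B s; P] = min (r : ℝ) s := fun r s =>
    (hpre.covariance_eval r s).trans (by norm_cast)
  rcases eq_or_ne q 0 with rfl | hq
  · have hzero (r : ℚ≥0) : min (0 : ℝ) r = 0 := min_eq_left r.cast_nonneg
    simpa [hzero, Pi.zero_def] using
      isQuasiInvariantShift_zero (P := P) (X := fun r : ℚ≥0 => B r)
  · have hvar : Var[B q; P] ≠ 0 := by
      rw [← covariance_self (hB.measurable _).aemeasurable, hcov, min_self]
      exact_mod_cast hq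
    have hgauss : IsGaussianProcess (fun r : ℚ≥0 => B r) P :=
      hpre.isGaussianProcess.comp_right fun r : ℚ≥0 => (r : ℝ≥0)
    simpa only [hcov] using
      isQuasiInvariantShift_mul_covariance hgauss (fun r => hB.measurable r) hvar c

lemma IsBrownianMotion.isQuasiInvariantShift_of_mem_rationalPolygons (hB : IsBrownianMotion P B)
    {φ : ℝ → ℝ} (hφ : φ ∈ rationalPolygons) :
    IsQuasiInvariantShift P (fun r : ℚ≥0 => B r) fun r => φ r := by
  suffices ∀ c : ℝ, IsQuasiInvariantShift P (fun r : ℚ≥0 => B r) fun r => c * φ r by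
    simpa using this 1
  induction hφ using Submodule.span_induction with
  | mem φ hφ =>
    obtain ⟨q, rfl⟩ := hφ
    exact hB.isQuasiInvariantShift_mul_min q
  | zero => exact fun c => by simpa [Pi.zero_def] using
      isQuasiInvariantShift_zero (P := P) (X := fun r : ℚ≥0 => B r)
  | add φ ψ _ _ hφ hψ =>
    intro c
    simpa only [Pi.add_apply, mul_add, Pi.add_def] using
      (hφ c).add (fun r : ℚ≥0 => hB.measurable r) (hψ c)
  | smul a φ _ hφ =>
    intro c
    simpa [Rat.smul_def, mul_assoc] using hφ (c * a)

lemma ae_map_exists_eq {E : Type*} [StandardBorelSpace Ω] [MeasurableSpace E] [MeasurableEq E]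
    {β : Ω → E} (hβ : Measurable β) {p : Ω → Prop} (hp : ∀ᵐ ω ∂P, p ω) :
    ∀ᵐ x ∂P.map β, ∃ ω, p ω ∧ β ω = x := by
  have := P.nonempty_of_neZero
  obtain ⟨M, hPM, hM, hMp⟩ := hp.exists_measurable_mem
  have hS : MeasurableSet {z : E × Ω | z.2 ∈ M ∧ β z.2 = z.1} :=
    (measurable_snd hM).inter (measurableSet_eq_fun (hβ.comp measurable_snd) measurable_fst)
  have hjoint : ∀ᵐ z ∂P.map fun ω => (β ω, id ω), z.2 ∈ M ∧ β z.2 = z.1 :=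
    (ae_map_iff (by fun_prop) hS).2 (mem_of_superset hPM fun ω hω => ⟨hω, rfl⟩)
  rw [← compProd_map_condDistrib aemeasurable_id] at hjoint
  filter_upwards [Measure.ae_ae_of_ae_compProd hjoint] with x hx
  obtain ⟨ω, hω, heq⟩ := hx.exists
  exact ⟨ω, hMp ω hω, heq⟩

lemma eqOn_Ici_of_forall_nnrat_eq {f g : ℝ → ℝ} (hf : ContinuousOn f (Ici 0))
    (hg : ContinuousOn g (Ici 0)) (h : ∀ r : ℚ≥0, f r = g r) : EqOn f g (Ici 0) := by
  intro u hu
  have hcont : ContinuousWithinAt (fun v => |f v - g v|) (Ioo u (u + 1)) u :=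
    ((hf.sub hg).abs u hu).mono fun v hv => hu.trans hv.1.le
  suffices |f u - g u| ≤ 0 by simpa [sub_eq_zero] using this
  refine le_of_forall_rat_mem_Ioo_le (F := fun v => |f v - g v|) (lt_add_one u) hcont fun r hr => ?_
  lift r to ℚ≥0 using by exact_mod_cast hu.trans hr.1.le
  simpa [sub_eq_zero] using h r

lemma IsBrownianMotion.ae_exists_eqOn_add [StandardBorelSpace Ω] (hB : IsBrownianMotion P B)
    {p : Ω → Prop} (hp : ∀ᵐ ω ∂P, p ω) :
    ∀ᵐ ω ∂P, ∀ φ ∈ rationalPolygons,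
      ∃ ω', p ω' ∧ EqOn (fun u => B u ω') ((fun u => B u ω) + φ) (Ici 0) := by
  refine (ae_ball_iff countable_rationalPolygons).2 fun φ hφ => ?_
  have hm := hB.measurable
  have hmap := (hB.isQuasiInvariantShift_of_mem_rationalPolygons hφ).ae_le
    (ae_map_exists_eq hB.measurable_ratPath (hp.and hB.cont))
  filter_upwards [ae_of_ae_map (by fun_prop) hmap, hB.cont] with ω ⟨ω', ⟨hpω', hcont'⟩, heq⟩ hcont
  have hφ := continuous_of_mem_rationalPolygons hφ
  exact ⟨ω', hpω', eqOn_Ici_of_forall_nnrat_eq hcont' (hcont.add hφ.continuousOn) (congrFun heq)⟩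

end Transfer

section Separation

lemma ae_condExp_indicator_pos {Ω : Type*} {m mΩ : MeasurableSpace Ω} {P : Measure Ω}
    [IsFiniteMeasure P] (hm : m ≤ mΩ) {S : Set Ω} (hS : MeasurableSet S) :
    ∀ᵐ ω ∂P, ω ∈ S → 0 < (P⟦S | m⟧) ω := by
  have hN : MeasurableSet[m] {ω | (P⟦S | m⟧) ω ≤ 0} :=
    measurableSet_le stronglyMeasurable_condExp.measurable measurable_const
  have hle : ∫ ω in {ω | (P⟦S | m⟧) ω ≤ 0}, (P⟦S | m⟧) ω ∂P ≤ 0 :=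
    setIntegral_nonpos (hm _ hN) fun ω hω => hω
  rw [setIntegral_condExp hm ((integrable_const 1).indicator hS) hN, setIntegral_indicator hS,
    setIntegral_const, smul_eq_mul, mul_one] at hle
  have hnull : P ({ω | (P⟦S | m⟧) ω ≤ 0} ∩ S) = 0 :=
    (measureReal_eq_zero_iff (measure_ne_top _ _)).1 (hle.antisymm measureReal_nonneg)
  filter_upwards [measure_eq_zero_iff_ae_notMem.1 hnull] with ω hω hωS
  exact not_le.1 fun hωN => hω ⟨hωN, hωS⟩

lemma exists_measurableSet_separating_of_condIndep {Ω : Type*} {m m₁ m₂ mΩ : MeasurableSpace Ω}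
    [StandardBorelSpace Ω] {P : Measure Ω} [IsFiniteMeasure P] (hm : m ≤ mΩ) (hm₁ : m₁ ≤ mΩ)
    (hm₂ : m₂ ≤ mΩ) (h : CondIndep m m₁ m₂ hm P) {F G : Set Ω} (hF : MeasurableSet[m₁] F)
    (hG : MeasurableSet[m₂] G) (hFG : ∀ᵐ ω ∂P, ω ∈ G → ω ∉ F) :
    ∃ S, MeasurableSet[m] S ∧ ∀ᵐ ω ∂P, (ω ∈ F → ω ∈ S) ∧ (ω ∈ G → ω ∉ S) := by
  have hprod := (condIndep_iff _ _ _ hm hm₁ hm₂ P).1 h F G hF hG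
  have hzero : P⟦F ∩ G | m⟧ =ᵐ[P] 0 := by
    have hind : (F ∩ G).indicator (fun _ => (1 : ℝ)) =ᵐ[P] 0 := by
      filter_upwards [hFG] with ω hω
      exact indicator_of_notMem (fun hωFG => hω hωFG.2 hωFG.1) _
    exact (condExp_congr_ae hind).trans (by rw [condExp_zero])
  refine ⟨{ω | 0 < (P⟦F | m⟧) ω},
    measurableSet_lt measurable_const stronglyMeasurable_condExp.measurable, ?_⟩
  filter_upwards [hprod, hzero, ae_condExp_indicator_pos hm (hm₁ _ hF),
    ae_condExp_indicator_pos hm (hm₂ _ hG)] with ω hprodω hzeroω hposF hposG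
  refine ⟨hposF, fun hωG hωS => (mul_pos hωS (hposG hωG)).ne' ?_⟩
  exact hprodω.symm.trans hzeroω

variable {Ω E : Type*} [MeasurableSpace Ω] [StandardBorelSpace Ω] [MeasurableSpace E]
  {P : Measure Ω} {Y : ℝ → Ω → E} {s t : ℝ} {F G : Set Ω}

lemma IsMarkov.exists_separating [IsFiniteMeasure P] (hY : IsMarkov P Y) (hs : 0 ≤ s) (hst : s ≤ t)
    (hF : MeasurableSet[MeasurableSpace.comap (Y t) inferInstance] F)
    (hG : MeasurableSet[natSigma Y s] G) (hFG : ∀ᵐ ω ∂P, ω ∈ G → ω ∉ F) :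
    ∃ A : Set E, ∀ᵐ ω ∂P, (ω ∈ F → Y s ω ∈ A) ∧ (ω ∈ G → Y s ω ∉ A) := by
  obtain ⟨hYs, hindep⟩ := hY s t hs hst
  obtain ⟨_, ⟨A, -, rfl⟩, hA⟩ := exists_measurableSet_separating_of_condIndep hYs
    (hY t t (hs.trans hst) le_rfl).1 (iSup_le fun u : Icc 0 s => (hY u u u.2.1 le_rfl).1) hindep
    hF hG hFG
  exact ⟨A, hA⟩

lemma IsMarkov.ae_separated_of_shifts [IsProbabilityMeasure P] {B : ℝ → Ω → ℝ}
    (hB : IsBrownianMotion P B) (hY : IsMarkov P Y) (hs : 0 ≤ s) (hst : s ≤ t)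
    (hF : MeasurableSet[MeasurableSpace.comap (Y t) inferInstance] F)
    (hG : MeasurableSet[natSigma Y s] G) (hFG : ∀ᵐ ω ∂P, ω ∈ G → ω ∉ F) :
    ∀ᵐ ω ∂P, ∀ φ ∈ rationalPolygons, ∀ ψ ∈ rationalPolygons, ∃ ω₁ ω₂,
      EqOn (fun u => B u ω₁) ((fun u => B u ω) + φ) (Ici 0) ∧
      EqOn (fun u => B u ω₂) ((fun u => B u ω) + ψ) (Ici 0) ∧
      (Y s ω₁ = Y s ω₂ → ω₁ ∈ F → ω₂ ∉ G) := by
  obtain ⟨A, hA⟩ := hY.exists_separating hs hst hF hG hFG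
  filter_upwards [hB.ae_exists_eqOn_add hA] with ω hω φ hφ ψ hψ
  obtain ⟨ω₁, ⟨hF₁, -⟩, heq₁⟩ := hω φ hφ
  obtain ⟨ω₂, ⟨-, hG₂⟩, heq₂⟩ := hω ψ hψ
  exact ⟨ω₁, ω₂, heq₁, heq₂, fun hY hωF hωG => hG₂ hωG (hY ▸ hF₁ hωF)⟩

end Separation

section SlopeVertexProcess

lemma IsFace.exists_perturbation {f : ℝ → ℝ} {m k g d : ℝ} (h : IsFace f m k g d)
    (hf : ContinuousOn f (Ici 0)) {a e x : ℚ} (ha : 0 ≤ a) (hx : (x : ℝ) ∈ Ioo g d)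
    (he : f x + e < m + a + k * x) {y : ℝ} (hgy : g ≤ y) (hyx : y ≠ x) :
    ∃ φ ∈ rationalPolygons, IsFace (f + φ) (m + a) k g d ∧ φ x = e ∧ φ y = a := by
  obtain ⟨φ, hφ_mem, hφ, hφa⟩ := h.exists_lift a ha
  have hφx := hφa x hx.1.le
  obtain ⟨ψ, hψ_mem, hψ, hψx, hψy⟩ := hφ.exists_bump
    (hf.add (continuous_of_mem_rationalPolygons hφ_mem).continuousOn) (e := e - a) hx
    (by simp only [Pi.add_apply, hφx]; push_cast; linarith) hyx
  refine ⟨φ + ψ, add_mem hφ_mem hψ_mem, by rwa [← add_assoc], ?_, ?_⟩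
  · simp [hφx, hψx]
  · simp [hφa y hgy, hψy]

variable {Ω : Type*} {B Z : ℝ → Ω → ℝ} {s t q m k g d : ℝ} {ω : Ω}

/-- The process `(Z(t), K'(t), D(t) - t)`, where `K` and `D` are those of `B`. -/
def slopeVertexProcess (B Z : ℝ → Ω → ℝ) (t : ℝ) (ω : Ω) : ℝ × ℝ × ℝ :=
  (Z t ω, Kslope B t ω, Dproc B t ω - t)

/-- The event that `D(s) > t` and that, seen from `(r, B r)` for each rational `r ∈ [0, s]`, the
ray of slope `K'(s)` is at height at most `q` at time `t`. It is observable by time `s`. -/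
def ceilingEvent (B : ℝ → Ω → ℝ) (s t q : ℝ) : Set Ω :=
  {ω | t < Dproc B s ω ∧ ∀ r : ℚ, (r : ℝ) ∈ Icc 0 s → B r ω + Kslope B s ω * (t - r) ≤ q}

/-- The event that `D(s) > t` and that, seen from `(r, X r)` for each rational `r ∈ (0, s]`, the
ray of slope `K'(r)` is at height at least `q` at time `t`. It is observable by time `s`. -/
def floorEvent (B : ℝ → Ω → ℝ) (s t q : ℝ) : Set Ω :=
  {ω | t < Dproc B s ω ∧ ∀ r : ℚ, (r : ℝ) ∈ Ioc 0 s → q ≤ Xproc B r ω + Kslope B r ω * (t - r)}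

lemma measurable_natSigma_slopeVertexProcess {u : ℝ} (hu : u ∈ Icc 0 s) :
    Measurable[natSigma (slopeVertexProcess B Z) s] (Z u) ∧
    Measurable[natSigma (slopeVertexProcess B Z) s] (Kslope B u) ∧
    Measurable[natSigma (slopeVertexProcess B Z) s] (Dproc B u) := by
  have hmeas := measurable_natSigma (slopeVertexProcess B Z) hu
  refine ⟨hmeas.fst, hmeas.snd.fst, ?_⟩
  simpa [slopeVertexProcess] using hmeas.snd.snd.add_const u

lemma measurableSet_ceilingEvent (hs : 0 ≤ s) :
    MeasurableSet[natSigma (slopeVertexProcess B B) s] (ceilingEvent B s t q) := by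
  obtain ⟨-, hslope, hvertex⟩ := measurable_natSigma_slopeVertexProcess (B := B) (Z := B)
    (right_mem_Icc.2 hs)
  rw [ceilingEvent, ofPred_and]
  refine (measurableSet_lt measurable_const hvertex).inter ?_
  simp only [ofPred_forall]
  refine .iInter fun r => .iInter fun hr => measurableSet_le ?_ measurable_const
  exact (measurable_natSigma_slopeVertexProcess hr).1.add (hslope.mul_const _)

lemma measurableSet_floorEvent (hs : 0 ≤ s) :
    MeasurableSet[natSigma (slopeVertexProcess B (Xproc B)) s] (floorEvent B s t q) := by
  obtain ⟨-, -, hvertex⟩ := measurable_natSigma_slopeVertexProcess (B := B) (Z := Xproc B)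
    (right_mem_Icc.2 hs)
  rw [floorEvent, ofPred_and]
  refine (measurableSet_lt measurable_const hvertex).inter ?_
  simp only [ofPred_forall]
  refine .iInter fun r => .iInter fun hr => measurableSet_le measurable_const ?_
  obtain ⟨hX, hslope, -⟩ := measurable_natSigma_slopeVertexProcess (B := B) (Z := Xproc B)
    (Ioc_subset_Icc_self hr)
  exact hX.add (hslope.mul_const _)

lemma IsTypicalPath.le_of_mem_ceilingEvent (h : IsTypicalPath fun u => B u ω) (hs : 0 < s)
    (hst : s < t) (hω : ω ∈ ceilingEvent B s t q) : B t ω ≤ q :=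
  le_of_forall_rat_extrapolation_le h.hasConcaveMajorant h.continuousOn hs hst hω.1 hω.2

lemma IsTypicalPath.le_of_mem_floorEvent (h : IsTypicalPath fun u => B u ω) (hs : 0 < s)
    (hst : s < t) (hω : ω ∈ floorEvent B s t q) : q ≤ Xproc B t ω :=
  le_of_forall_rat_le_extrapolation h.hasConcaveMajorant h.continuousOn hs hst hω.1 hω.2

lemma IsFace.mem_ceilingEvent (h : IsFace (fun u => B u ω) m k g d) (hs : s ∈ Ioo g d)
    (htd : t < d) (hq : m + k * t ≤ q) : ω ∈ ceilingEvent B s t q := by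
  refine ⟨htd.trans_eq (h.firstVertex_eq hs).symm, fun r hr => ?_⟩
  have hK : Kslope B s ω = k := h.rightDeriv_concaveMajorant ⟨hs.1.le, hs.2⟩
  rw [hK]
  linarith [h.le r hr.1]

lemma IsFace.mem_floorEvent (h : IsFace (fun u => B u ω) m k g d) (hs : s ∈ Ioo g d)
    (ht : t ∈ Ioo g d) (hq : q ≤ m + k * t) : ω ∈ floorEvent B s t q := by
  refine ⟨ht.2.trans_eq (h.firstVertex_eq hs).symm, fun r hr => hq.trans ?_⟩
  have hle := h.hasConcaveMajorant.le_concaveMajorant hr.1.le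
  have htangent := h.hasConcaveMajorant.concaveMajorant_le_tangent hr.1 (h.pos.le.trans ht.1.le)
  rw [h.concaveMajorant_eq ⟨ht.1.le, ht.2.le⟩] at htangent
  have hslope : Kslope B r ω = rightDeriv (concaveMajorant fun u => B u ω) r := rfl
  rw [Xproc, Kproc, hslope]
  linarith

lemma IsFace.slopeVertexProcess_eq {m' : ℝ} {ω' : Ω} (h : IsFace (fun u => B u ω) m k g d)
    (h' : IsFace (fun u => B u ω') m' k g d) (hs : s ∈ Ioo g d) (hZ : Z s ω = Z s ω') :
    slopeVertexProcess B Z s ω = slopeVertexProcess B Z s ω' := by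
  have hslope : Kslope B s ω = Kslope B s ω' :=
    (h.rightDeriv_concaveMajorant ⟨hs.1.le, hs.2⟩).trans
      (h'.rightDeriv_concaveMajorant ⟨hs.1.le, hs.2⟩).symm
  have hvertex : Dproc B s ω = Dproc B s ω' :=
    (h.firstVertex_eq hs).trans (h'.firstVertex_eq hs).symm
  simp only [slopeVertexProcess, hZ, hslope, hvertex]

lemma IsFace.Xproc_eq (h : IsFace (fun u => B u ω) m k g d) (hs : s ∈ Ioo g d) :
    Xproc B s ω = 2 * (m + k * s) - B s ω := by
  rw [Xproc, Kproc, h.concaveMajorant_eq ⟨hs.1.le, hs.2.le⟩]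

end SlopeVertexProcess

section NotMarkov

variable {Ω : Type*} [MeasurableSpace Ω] {P : Measure Ω} [IsProbabilityMeasure P]
  {B : ℝ → Ω → ℝ}

lemma IsBrownianMotion.exists_isFace_of_ae (hB : IsBrownianMotion P B) {p : Ω → Prop}
    (hp : ∀ᵐ ω ∂P, p ω) {s : ℝ} (hs : 0 < s) :
    ∃ ω m k g d, p ω ∧ ContinuousOn (fun u => B u ω) (Ici 0) ∧
      IsFace (fun u => B u ω) m k g d ∧ s ∈ Ioo g d := by
  have hneg : ∃ᵐ ω ∂P, B s ω < 0 := by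
    have := isOpenPosMeasure_gaussianReal 0 (Real.toNNReal_pos.2 hs).ne'
    have hlaw := (hB.isPreBrownianReal.hasLaw_eval s.toNNReal).map_eq
    rw [Real.coe_toNNReal s hs.le] at hlaw
    have hpos := (isOpen_Iio (a := (0 : ℝ))).measure_pos (gaussianReal 0 s.toNNReal) nonempty_Iio
    rw [← hlaw, Measure.map_apply (hB.measurable s) measurableSet_Iio] at hpos
    exact frequently_ae_iff.2 hpos.ne'
  obtain ⟨ω, hneg, hpω, hω⟩ := (hneg.and_eventually (hp.and hB.ae_isTypicalPath)).exists
  obtain ⟨m, k, g, d, hface, hsgd⟩ := hω.exists_isFace hs hneg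
  exact ⟨ω, m, k, g, d, hpω, hω.continuousOn, hface, hsgd⟩

variable [StandardBorelSpace Ω]

lemma IsMarkov.ae_separated_ceiling (hB : IsBrownianMotion P B)
    (hY : IsMarkov P (slopeVertexProcess B B)) {s t : ℝ} (hs : 0 < s) (hst : s < t) (q : ℝ) :
    ∀ᵐ ω ∂P, ∀ φ ∈ rationalPolygons, ∀ ψ ∈ rationalPolygons, ∃ ω₁ ω₂,
      EqOn (fun u => B u ω₁) ((fun u => B u ω) + φ) (Ici 0) ∧
      EqOn (fun u => B u ω₂) ((fun u => B u ω) + ψ) (Ici 0) ∧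
      (slopeVertexProcess B B s ω₁ = slopeVertexProcess B B s ω₂ → q < B t ω₁ →
        ω₂ ∉ ceilingEvent B s t q) := by
  refine hY.ae_separated_of_shifts hB hs.le hst.le (F := {ω | q < B t ω})
    ⟨{z | q < z.1}, measurableSet_lt measurable_const measurable_fst, rfl⟩
    (measurableSet_ceilingEvent hs.le) ?_
  filter_upwards [hB.ae_isTypicalPath] with ω hω hceil
  exact (hω.le_of_mem_ceilingEvent hs hst hceil).not_gt

lemma IsMarkov.ae_separated_floor (hB : IsBrownianMotion P B)
    (hY : IsMarkov P (slopeVertexProcess B (Xproc B))) {s t : ℝ} (hs : 0 < s) (hst : s < t)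
    (q : ℝ) :
    ∀ᵐ ω ∂P, ∀ φ ∈ rationalPolygons, ∀ ψ ∈ rationalPolygons, ∃ ω₁ ω₂,
      EqOn (fun u => B u ω₁) ((fun u => B u ω) + φ) (Ici 0) ∧
      EqOn (fun u => B u ω₂) ((fun u => B u ω) + ψ) (Ici 0) ∧
      (slopeVertexProcess B (Xproc B) s ω₁ = slopeVertexProcess B (Xproc B) s ω₂ →
        Xproc B t ω₁ < q → ω₂ ∉ floorEvent B s t q) := by
  refine hY.ae_separated_of_shifts hB hs.le hst.le (F := {ω | Xproc B t ω < q})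
    ⟨{z | z.1 < q}, measurableSet_lt measurable_fst measurable_const, rfl⟩
    (measurableSet_floorEvent hs.le) ?_
  filter_upwards [hB.ae_isTypicalPath] with ω hω hfloor
  exact (hω.le_of_mem_floorEvent hs hst hfloor).not_gt

theorem not_isMarkov_slopeVertexProcess_self (hB : IsBrownianMotion P B) :
    ¬ IsMarkov P (slopeVertexProcess B B) := by
  intro hY
  have hsep := ae_all_iff.2 fun t : ℚ => ae_all_iff.2 fun ht : (1 : ℝ) < t =>
    ae_all_iff.2 fun q : ℚ => hY.ae_separated_ceiling hB one_pos ht q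
  obtain ⟨ω, m, k, g, d, hω, hcont, hface, h1⟩ := hB.exists_isFace_of_ae hsep one_pos
  obtain ⟨t, h1t, htd⟩ := exists_rat_btwn h1.2
  obtain ⟨q, hq⟩ := exists_rat_gt (m + k * t)
  obtain ⟨a, ha⟩ := exists_rat_gt (max 0 (q - B t ω))
  rw [max_lt_iff] at ha
  obtain ⟨φ, hφ, hφface, hφ1, hφt⟩ := hface.exists_perturbation hcont (a := a) (e := 0) (x := 1)
    (by exact_mod_cast ha.1.le) (by simpa using h1)
    (by have := hface.lt_of_mem_Ioo 1 h1; push_cast; linarith) (h1.1.trans h1t).le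
    (by simpa using h1t.ne')
  obtain ⟨ω₁, ω₂, heq₁, heq₂, hω₁₂⟩ := hω t h1t q φ hφ 0 (zero_mem _)
  have hface₁ := hφface.congr heq₁.symm
  have hface₂ := hface.congr (by simpa using heq₂.symm)
  refine hω₁₂ (hface₁.slopeVertexProcess_eq hface₂ h1 ?_) ?_ (hface₂.mem_ceilingEvent h1 htd hq.le)
  · have hB₁ : B 1 ω₁ = B 1 ω + φ 1 := heq₁ (zero_le_one' ℝ)
    have hB₂ : B 1 ω₂ = B 1 ω + 0 := heq₂ (zero_le_one' ℝ)
    rw [hB₁, hB₂, ← Rat.cast_one, hφ1, Rat.cast_zero]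
  · have hBt : B t ω₁ = B t ω + φ t := heq₁ (zero_le_one.trans h1t.le)
    rw [hBt, hφt]
    linarith

theorem not_isMarkov_slopeVertexProcess_Xproc (hB : IsBrownianMotion P B) :
    ¬ IsMarkov P (slopeVertexProcess B (Xproc B)) := by
  intro hY
  have hsep := ae_all_iff.2 fun t : ℚ => ae_all_iff.2 fun ht : (1 : ℝ) < t =>
    ae_all_iff.2 fun q : ℚ => hY.ae_separated_floor hB one_pos ht q
  obtain ⟨ω, m, k, g, d, hω, hcont, hface, h1⟩ := hB.exists_isFace_of_ae hsep one_pos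
  obtain ⟨t, h1t, htd⟩ := exists_rat_btwn h1.2
  have htgd : (t : ℝ) ∈ Ioo g d := ⟨h1.1.trans h1t, htd⟩
  obtain ⟨a, ha0, ha⟩ := exists_rat_btwn (sub_pos.2 (hface.lt_of_mem_Ioo 1 h1))
  obtain ⟨q, hq, hqa⟩ := exists_rat_btwn (lt_add_of_pos_right (m + k * t) ha0)
  obtain ⟨b, hb, hbt⟩ := exists_rat_btwn (show 2 * (m + k * t) - B t ω - q < m + k * t - B t ω by
    linarith)
  obtain ⟨φ, hφ, hφface, hφt, hφ1⟩ := hface.exists_perturbation hcont (a := 0) (e := b) le_rfl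
    htgd (by push_cast; linarith) h1.1.le h1t.ne
  -- Raising the face by `a` and `B 1` by `2 * a` leaves `X 1 = 2 * K 1 - B 1` unchanged.
  obtain ⟨ψ, hψ, hψface, hψ1, -⟩ := hface.exists_perturbation hcont (a := a) (e := 2 * a) (x := 1)
    (by exact_mod_cast ha0.le) (by simpa using h1) (by push_cast; linarith) htgd.1.le
    (by simpa using h1t.ne')
  obtain ⟨ω₁, ω₂, heq₁, heq₂, hω₁₂⟩ := hω t h1t q φ hφ ψ hψ
  have hface₁ := hφface.congr heq₁.symm
  have hface₂ := hψface.congr heq₂.symm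
  refine hω₁₂ (hface₁.slopeVertexProcess_eq hface₂ h1 ?_) ?_
    (hface₂.mem_floorEvent h1 htgd (by linarith))
  · have hB₁ : B 1 ω₁ = B 1 ω + φ 1 := heq₁ (zero_le_one' ℝ)
    have hB₂ : B 1 ω₂ = B 1 ω + ψ 1 := heq₂ (zero_le_one' ℝ)
    rw [hface₁.Xproc_eq h1, hface₂.Xproc_eq h1, hB₁, hB₂, hφ1, ← Rat.cast_one, hψ1]
    push_cast
    ring
  · have hBt : B t ω₁ = B t ω + φ t := heq₁ (zero_le_one.trans h1t.le)
    rw [hface₁.Xproc_eq htgd, hBt, hφt]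
    push_cast
    linarith

end NotMarkov

/-- Neither `(X(t), K'(t), D(t) - t)` nor `(B(t), K'(t), D(t) - t)` is a
Markov process, where `X = 2K - B`. -/
theorem X_and_B_with_slope_D_not_markov {Ω : Type*} [MeasurableSpace Ω] [StandardBorelSpace Ω]
    (P : Measure Ω) [IsProbabilityMeasure P] (B : ℝ → Ω → ℝ)
    (hB : IsBrownianMotion P B) :
    ¬ IsMarkov P (fun t ω => ((Xproc B t ω, Kslope B t ω, Dproc B t ω - t) : ℝ × ℝ × ℝ)) ∧
    ¬ IsMarkov P (fun t ω => ((B t ω, Kslope B t ω, Dproc B t ω - t) : ℝ × ℝ × ℝ)) :=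
  ⟨not_isMarkov_slopeVertexProcess_Xproc hB, not_isMarkov_slopeVertexProcess_self hB⟩
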